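/- For i.i.d. uniform random points x₁, …, x_N and X in a convex body K ⊂ ℝ^s of volume V, the expected nearest-neighbor distance satisfies E[min_i |X − xᵢ|] ∼ (Γ(s/2+1)^{1/s} Γ(1/s) / (√π s)) (V/N)^{1/s} as N → ∞. -/

import Mathlib

open MeasureTheory Filter

/-!
Conditionally on `X = x`, the nearest of `N` independent points of law `μ` is farther than `t` with
probability `(1 - μ (closedBall x t)) ^ N`, so its mean distance is the integral of this power over
`t > 0`. If `μ (closedBall x t) ∼ b t ^ p` as `t → 0`, the substitution `t = N ^ (-1 / p) * u` turns
`N ^ (1 / p)` times that integral into one whose integrand converges to `exp (-b u ^ p)`, with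
integral `b ^ (-1 / p) * Γ (1 / p + 1)`. A lower bound `min 1 (c t ^ p) ≤ μ (closedBall x t)`,
uniform in `x`, dominates both this limit and the average over `x`; it also makes the support
bounded, since the minimum equals `1` for large `t`.

For the uniform law on a convex body `K`, almost every point is interior, which gives `b`, and the
lower bound comes from shrinking `K` towards `x`: the image of `K` under the homothety of centre `x`
and ratio `t / D`, with `D ≥ diam K`, lies in both `K` and `closedBall x t`.
-/

section LaplaceMethod

open Set Real Topology

lemma one_sub_pow_le_exp_neg_mul {x y : ℝ} {n : ℕ} (hn : n ≠ 0) (hy : y ≤ 1)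
    (hxy : min 1 x ≤ y) : (1 - y) ^ n ≤ exp (-(n * x)) := by
  rcases min_le_iff.1 hxy with h | h
  · simp [le_antisymm hy h, hn, exp_nonneg]
  · calc (1 - y) ^ n ≤ exp (-x) ^ n :=
          pow_le_pow_left₀ (sub_nonneg.2 hy) (by linarith [one_sub_le_exp_neg x]) n
      _ = exp (-(n * x)) := by rw [← exp_nat_mul, mul_neg]

lemma natCast_mul_rpow_neg_one_div_mul_rpow {p u : ℝ} {n : ℕ} (hp : p ≠ 0) (hn : n ≠ 0)
    (hu : 0 ≤ u) : n * ((n : ℝ) ^ (-1 / p) * u) ^ p = u ^ p := by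
  rw [mul_rpow (by positivity) hu, ← rpow_mul n.cast_nonneg, div_mul_cancel₀ _ hp, rpow_neg_one,
    mul_inv_cancel_left₀ (Nat.cast_ne_zero.2 hn)]

lemma rpow_mul_integral_one_sub_pow (F : ℝ → ℝ) (p : ℝ) {n : ℕ} (hn : n ≠ 0) :
    (n : ℝ) ^ (1 / p) * ∫ t in Ioi 0, (1 - F t) ^ n =
      ∫ u in Ioi 0, (1 - F ((n : ℝ) ^ (-1 / p) * u)) ^ n := by
  have hn' : (0 : ℝ) < n := by positivity
  rw [integral_comp_mul_left_Ioi (fun t => (1 - F t) ^ n) 0 (rpow_pos_of_pos hn' _), mul_zero,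
    neg_div, rpow_neg hn'.le, inv_inv, smul_eq_mul]

variable {F : ℝ → ℝ} {p c : ℝ}

lemma one_sub_pow_comp_rpow_mul_le (hp : p ≠ 0) (hF_le : ∀ t > 0, F t ≤ 1)
    (hF_ge : ∀ t > 0, min 1 (c * t ^ p) ≤ F t) {n : ℕ} (hn : n ≠ 0) {u : ℝ} (hu : 0 < u) :
    (1 - F ((n : ℝ) ^ (-1 / p) * u)) ^ n ≤ exp (-c * u ^ p) := by
  have hpos : 0 < (n : ℝ) ^ (-1 / p) * u := by positivity
  convert one_sub_pow_le_exp_neg_mul hn (hF_le _ hpos) (hF_ge _ hpos) using 2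
  rw [mul_left_comm, natCast_mul_rpow_neg_one_div_mul_rpow hp hn hu.le, neg_mul]

lemma integrableOn_exp_neg_mul_rpow (hp : 0 < p) (hc : 0 < c) :
    IntegrableOn (fun u : ℝ => exp (-c * u ^ p)) (Ioi 0) := by
  simpa using integrableOn_rpow_mul_exp_neg_mul_rpow (s := 0) (by norm_num) hp hc

lemma rpow_mul_integral_one_sub_pow_le (hp : 0 < p) (hc : 0 < c) (hF_le : ∀ t > 0, F t ≤ 1)
    (hF_ge : ∀ t > 0, min 1 (c * t ^ p) ≤ F t) {n : ℕ} (hn : n ≠ 0) :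
    (n : ℝ) ^ (1 / p) * ∫ t in Ioi 0, (1 - F t) ^ n ≤ c ^ (-1 / p) * Gamma (1 / p + 1) := by
  rw [rpow_mul_integral_one_sub_pow F p hn, ← integral_exp_neg_mul_rpow hp hc]
  refine integral_mono_of_nonneg ?_ (integrableOn_exp_neg_mul_rpow hp hc) ?_ <;>
    filter_upwards [ae_restrict_mem measurableSet_Ioi] with u hu
  · have hpos : 0 < (n : ℝ) ^ (-1 / p) * u := mul_pos (by positivity) hu
    exact pow_nonneg (sub_nonneg.2 (hF_le _ hpos)) n
  · exact one_sub_pow_comp_rpow_mul_le hp.ne' hF_le hF_ge hn hu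

lemma tendsto_one_sub_pow_comp_rpow_mul {b u : ℝ} (hp : 0 < p) (hu : 0 < u)
    (hF : Tendsto (fun t => F t / t ^ p) (𝓝[>] 0) (𝓝 b)) :
    Tendsto (fun n : ℕ => (1 - F ((n : ℝ) ^ (-1 / p) * u)) ^ n) atTop (𝓝 (exp (-b * u ^ p))) := by
  have hscale : Tendsto (fun n : ℕ => (n : ℝ) ^ (-1 / p) * u) atTop (𝓝[>] 0) := by
    refine tendsto_nhdsWithin_iff.2 ⟨?_, ?_⟩
    · have := (tendsto_rpow_neg_atTop (one_div_pos.2 hp)).comp tendsto_natCast_atTop_atTop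
      simpa [Function.comp_def, neg_div] using this.mul_const u
    · filter_upwards [eventually_ne_atTop 0] with n hn
      exact mem_Ioi.2 (by positivity)
  have hmul : Tendsto (fun n : ℕ => n * F ((n : ℝ) ^ (-1 / p) * u)) atTop (𝓝 (b * u ^ p)) := by
    refine ((hF.comp hscale).mul_const (u ^ p)).congr' ?_
    filter_upwards [eventually_ne_atTop 0] with n hn
    have hpos : 0 < ((n : ℝ) ^ (-1 / p) * u) ^ p := by positivity
    rw [Function.comp_apply, ← natCast_mul_rpow_neg_one_div_mul_rpow hp.ne' hn hu.le,
      mul_left_comm, div_mul_cancel₀ _ hpos.ne']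
  simpa [sub_eq_add_neg] using
    tendsto_one_add_pow_exp_of_tendsto (g := fun n => -F ((n : ℝ) ^ (-1 / p) * u))
      (by simpa using hmul.neg)

lemma le_of_tendsto_div_rpow {b : ℝ} (hp : 0 < p) (hF_ge : ∀ t > 0, min 1 (c * t ^ p) ≤ F t)
    (hF_lim : Tendsto (fun t => F t / t ^ p) (𝓝[>] 0) (𝓝 b)) : c ≤ b := by
  have hcont : Tendsto (fun t : ℝ => c * t ^ p) (𝓝[>] 0) (𝓝 (c * 0 ^ p)) :=
    ((continuousAt_rpow_const 0 p (.inr hp.le)).tendsto.const_mul c).mono_left nhdsWithin_le_nhds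
  rw [zero_rpow hp.ne', mul_zero] at hcont
  refine ge_of_tendsto hF_lim ?_
  filter_upwards [hcont.eventually_lt_const one_pos, self_mem_nhdsWithin] with t ht1 ht0
  rw [le_div_iff₀ (rpow_pos_of_pos ht0 p)]
  simpa only [min_eq_right ht1.le] using hF_ge t ht0

lemma tendsto_rpow_mul_integral_one_sub_pow {b : ℝ} (hp : 0 < p) (hc : 0 < c) (hF : Measurable F)
    (hF_le : ∀ t > 0, F t ≤ 1) (hF_ge : ∀ t > 0, min 1 (c * t ^ p) ≤ F t)
    (hF_lim : Tendsto (fun t => F t / t ^ p) (𝓝[>] 0) (𝓝 b)) :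
    Tendsto (fun n : ℕ => (n : ℝ) ^ (1 / p) * ∫ t in Ioi 0, (1 - F t) ^ n) atTop
      (𝓝 (b ^ (-1 / p) * Gamma (1 / p + 1))) := by
  have hb : 0 < b := hc.trans_le (le_of_tendsto_div_rpow hp hF_ge hF_lim)
  rw [← integral_exp_neg_mul_rpow hp hb]
  refine Tendsto.congr' ?_ (tendsto_integral_filter_of_dominated_convergence
    (fun u => exp (-c * u ^ p)) ?_ ?_ (integrableOn_exp_neg_mul_rpow hp hc) ?_)
    (f₁ := fun n : ℕ => ∫ u in Ioi 0, (1 - F ((n : ℝ) ^ (-1 / p) * u)) ^ n)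
  · filter_upwards [eventually_ne_atTop 0] with n hn
    exact (rpow_mul_integral_one_sub_pow F p hn).symm
  · exact .of_forall fun n => Measurable.aestronglyMeasurable (by fun_prop)
  · filter_upwards [eventually_ne_atTop 0] with n hn
    filter_upwards [ae_restrict_mem measurableSet_Ioi] with u hu
    have hpos : 0 < (n : ℝ) ^ (-1 / p) * u := mul_pos (by positivity) hu
    rw [norm_of_nonneg (pow_nonneg (sub_nonneg.2 (hF_le _ hpos)) n)]
    exact one_sub_pow_comp_rpow_mul_le hp.ne' hF_le hF_ge hn hu
  · filter_upwards [ae_restrict_mem measurableSet_Ioi] with u hu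
    exact tendsto_one_sub_pow_comp_rpow_mul hp hu hF_lim

end LaplaceMethod

section NearestNeighbor

open Set Metric Topology

lemma integrable_ciInf {α ι : Type*} [Finite ι] {mα : MeasurableSpace α} {μ : Measure α}
    {f : ι → α → ℝ} (hf : ∀ i, Integrable (f i) μ) : Integrable (fun x => ⨅ i, f i x) μ := by
  cases nonempty_fintype ι
  rcases isEmpty_or_nonempty ι with _ | _
  · simp
  refine (integrable_finsetSum Finset.univ fun i _ => (hf i).norm).mono'
    (AEMeasurable.iInf fun i => (hf i).aemeasurable).aestronglyMeasurable (ae_of_all _ fun x => ?_)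
  obtain ⟨i, hi⟩ := exists_eq_ciInf_of_finite (f := fun i => f i x)
  rw [← hi]
  exact Finset.single_le_sum (f := fun i => ‖f i x‖) (fun _ _ => norm_nonneg _) (Finset.mem_univ i)

variable {E : Type*} [PseudoMetricSpace E] [MeasurableSpace E]

section ConditionalMean

variable {ι : Type*} [Fintype ι] [Nonempty ι]

lemma measureReal_pi_lt_iInf_dist (μ : Measure E) [SigmaFinite μ] (x : E) (t : ℝ) :
    (Measure.pi fun _ : ι => μ).real {y | t < ⨅ i, dist x (y i)} =
      μ.real (closedBall x t)ᶜ ^ Fintype.card ι := by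
  have hset : {y : ι → E | t < ⨅ i, dist x (y i)} = univ.pi fun _ => (closedBall x t)ᶜ := by
    ext y
    simp [iInf, (finite_range _).lt_csInf_iff (range_nonempty _), dist_comm x]
  simp [hset, Measure.real, Measure.pi_pi]

lemma integral_iInf_dist_pi [OpensMeasurableSpace E] {μ : Measure E} [IsProbabilityMeasure μ]
    {x : E} (hx : Integrable (dist x) μ) :
    ∫ y : ι → E, ⨅ i, dist x (y i) ∂(Measure.pi fun _ => μ) =
      ∫ t in Ioi 0, (1 - μ.real (closedBall x t)) ^ Fintype.card ι := by
  have hint : Integrable (fun y : ι → E => ⨅ i, dist x (y i)) (Measure.pi fun _ => μ) :=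
    integrable_ciInf fun i => integrable_comp_eval (μ := fun _ => μ) hx
  rw [hint.integral_eq_integral_meas_lt
    (ae_of_all _ fun _ => Real.iInf_nonneg fun _ => dist_nonneg)]
  simp_rw [measureReal_pi_lt_iInf_dist, probReal_compl_eq_one_sub measurableSet_closedBall]

end ConditionalMean

/-- The expected distance from one of `N + 1` independent points of law `μ` (the last one) to the
nearest of the `N` others. -/
noncomputable def meanNearestDist (μ : Measure E) (N : ℕ) : ℝ :=
  ∫ ω : Fin (N + 1) → E, ⨅ i : Fin N, dist (ω (Fin.last N)) (ω i.castSucc)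
    ∂(Measure.pi fun _ : Fin (N + 1) => μ)

lemma meanNearestDist_eq_integral_prod (μ : Measure E) [SigmaFinite μ] (N : ℕ) :
    meanNearestDist μ N = ∫ z : E × (Fin N → E), ⨅ i, dist z.1 (z.2 i)
      ∂(μ.prod (Measure.pi fun _ => μ)) := by
  rw [meanNearestDist,
    ← (measurePreserving_piFinSuccAbove (fun _ => μ) (Fin.last N)).integral_comp']
  simp [MeasurableEquiv.piFinSuccAbove, Fin.insertNthEquiv, Fin.init]

variable {μ : Measure E} [IsProbabilityMeasure μ]

lemma integrable_iInf_dist_prod_pi {ι : Type*} [Fintype ι]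
    (hμ : Integrable (fun z : E × E => dist z.1 z.2) (μ.prod μ)) :
    Integrable (fun z : E × (ι → E) => ⨅ i, dist z.1 (z.2 i))
      (μ.prod (Measure.pi fun _ => μ)) :=
  integrable_ciInf fun i =>
    (((MeasurePreserving.id μ).prod (measurePreserving_eval (fun _ : ι => μ) i)).integrable_comp
      hμ.aestronglyMeasurable).2 hμ

variable [OpensMeasurableSpace E]

lemma ae_integral_iInf_dist_pi_eq {ι : Type*} [Fintype ι] [Nonempty ι]
    (hμ : Integrable (fun z : E × E => dist z.1 z.2) (μ.prod μ)) :
    (fun x => ∫ y : ι → E, ⨅ i, dist x (y i) ∂(Measure.pi fun _ => μ)) =ᵐ[μ]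
      fun x => ∫ t in Ioi 0, (1 - μ.real (closedBall x t)) ^ Fintype.card ι := by
  filter_upwards [hμ.prod_right_ae] with x hx using integral_iInf_dist_pi hx

lemma aestronglyMeasurable_integral_one_sub_pow
    (hμ : Integrable (fun z : E × E => dist z.1 z.2) (μ.prod μ)) {N : ℕ} (hN : N ≠ 0) :
    AEStronglyMeasurable (fun x => ∫ t in Ioi 0, (1 - μ.real (closedBall x t)) ^ N) μ := by
  have : NeZero N := ⟨hN⟩
  simpa only [Fintype.card_fin] using (integrable_iInf_dist_prod_pi
    hμ).integral_prod_left.aestronglyMeasurable.congr (ae_integral_iInf_dist_pi_eq (ι := Fin N) hμ)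

lemma meanNearestDist_eq_integral_one_sub_pow
    (hμ : Integrable (fun z : E × E => dist z.1 z.2) (μ.prod μ)) {N : ℕ} (hN : N ≠ 0) :
    meanNearestDist μ N = ∫ x, (∫ t in Ioi 0, (1 - μ.real (closedBall x t)) ^ N) ∂μ := by
  have : NeZero N := ⟨hN⟩
  rw [meanNearestDist_eq_integral_prod, integral_prod _ (integrable_iInf_dist_prod_pi hμ),
    integral_congr_ae (ae_integral_iInf_dist_pi_eq hμ), Fintype.card_fin]

variable {p c : ℝ}

lemma ae_dist_le_of_min_one_le_measureReal_closedBall (hp : p ≠ 0) (hc : 0 < c) {x : E}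
    (hx : ∀ t > 0, min 1 (c * t ^ p) ≤ μ.real (closedBall x t)) :
    ∀ᵐ y ∂μ, dist x y ≤ c ^ (-1 / p) := by
  have hone : c * (c ^ (-1 / p)) ^ p = 1 := by
    rw [← Real.rpow_mul hc.le, div_mul_cancel₀ _ hp, Real.rpow_neg_one, mul_inv_cancel₀ hc.ne']
  have hball : μ.real (closedBall x (c ^ (-1 / p))) = 1 :=
    measureReal_le_one.antisymm (by simpa [hone] using hx (c ^ (-1 / p)) (by positivity))
  have hmem : closedBall x (c ^ (-1 / p)) ∈ ae μ :=
    (mem_ae_iff_prob_eq_one measurableSet_closedBall).2 ((ENNReal.toReal_eq_one_iff _).1 hball)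
  filter_upwards [hmem] with y hy using mem_closedBall'.1 hy

variable [SecondCountableTopology E]

lemma integrable_dist_of_min_one_le_measureReal_closedBall (hp : p ≠ 0) (hc : 0 < c)
    (hμ : ∀ᵐ x ∂μ, ∀ t > 0, min 1 (c * t ^ p) ≤ μ.real (closedBall x t)) :
    Integrable (fun z : E × E => dist z.1 z.2) (μ.prod μ) := by
  refine .of_bound measurable_dist.aestronglyMeasurable (c ^ (-1 / p)) ?_
  simp only [Real.norm_of_nonneg dist_nonneg]
  rw [Measure.ae_prod_iff_ae_ae (measurableSet_le measurable_dist measurable_const)]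
  filter_upwards [hμ] with x hx using
    ae_dist_le_of_min_one_le_measureReal_closedBall hp hc hx

theorem tendsto_rpow_mul_meanNearestDist {b : E → ℝ} (hp : 0 < p) (hc : 0 < c)
    (hμ_ge : ∀ᵐ x ∂μ, ∀ t > 0, min 1 (c * t ^ p) ≤ μ.real (closedBall x t))
    (hμ_lim : ∀ᵐ x ∂μ, Tendsto (fun t => μ.real (closedBall x t) / t ^ p) (𝓝[>] 0) (𝓝 (b x))) :
    Tendsto (fun N : ℕ => (N : ℝ) ^ (1 / p) * meanNearestDist μ N) atTop
      (𝓝 (∫ x, b x ^ (-1 / p) * Real.Gamma (1 / p + 1) ∂μ)) := by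
  have hint := integrable_dist_of_min_one_le_measureReal_closedBall hp.ne' hc hμ_ge
  refine Tendsto.congr' ?_ (tendsto_integral_filter_of_dominated_convergence
    (fun _ => c ^ (-1 / p) * Real.Gamma (1 / p + 1)) ?_ ?_ (integrable_const _) ?_)
    (f₁ := fun N : ℕ =>
      ∫ x, (N : ℝ) ^ (1 / p) * (∫ t in Ioi 0, (1 - μ.real (closedBall x t)) ^ N) ∂μ)
  · filter_upwards [eventually_ne_atTop 0] with N hN
    rw [integral_const_mul, meanNearestDist_eq_integral_one_sub_pow hint hN]
  · filter_upwards [eventually_ne_atTop 0] with N hN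
    exact (aestronglyMeasurable_integral_one_sub_pow hint hN).const_mul _
  · filter_upwards [eventually_ne_atTop 0] with N hN
    filter_upwards [hμ_ge] with x hx
    have hnonneg : 0 ≤ ∫ t in Ioi 0, (1 - μ.real (closedBall x t)) ^ N :=
      integral_nonneg fun t => pow_nonneg (sub_nonneg.2 measureReal_le_one) N
    rw [Real.norm_of_nonneg (by positivity)]
    exact rpow_mul_integral_one_sub_pow_le hp hc (fun _ _ => measureReal_le_one) hx hN
  · filter_upwards [hμ_ge, hμ_lim] with x hx hx_lim
    have hmono : Monotone fun t => μ.real (closedBall x t) := fun _ _ h =>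
      measureReal_mono (closedBall_subset_closedBall h)
    exact tendsto_rpow_mul_integral_one_sub_pow hp hc hmono.measurable
      (fun _ _ => measureReal_le_one) hx hx_lim

end NearestNeighbor

section ConvexBody

open Set Metric Topology ProbabilityTheory Module Bornology

lemma measureReal_cond_apply {α : Type*} {mα : MeasurableSpace α} (μ : Measure α) {s t : Set α}
    (ht : MeasurableSet t) : μ[|s].real t = (μ.real s)⁻¹ * μ.real (s ∩ t) := by
  simp [Measure.real, cond_apply' ht]

variable {E : Type*} [NormedAddCommGroup E] [NormedSpace ℝ E] {K : Set E}

lemma homothety_image_subset_closedBall_inter (hK : Convex ℝ K) {D : ℝ}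
    (hD : ∀ x ∈ K, ∀ y ∈ K, dist x y ≤ D) {x : E} (hx : x ∈ K) {r : ℝ} (hr : r ∈ Icc 0 1) :
    AffineMap.homothety x r '' K ⊆ K ∩ closedBall x (r * D) := by
  rintro _ ⟨y, hy, rfl⟩
  refine ⟨AffineMap.homothety_eq_lineMap x r y ▸ hK.lineMap_mem hx hy hr, ?_⟩
  rw [mem_closedBall, dist_homothety_center, Real.norm_of_nonneg hr.1]
  exact mul_le_mul_of_nonneg_left (hD x hx y hy) hr.1

variable [FiniteDimensional ℝ E] [MeasurableSpace E] [BorelSpace E]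
variable (ν : Measure E) [ν.IsAddHaarMeasure]

lemma ae_cond_mem_interior (hK : Convex ℝ K) : ∀ᵐ x ∂ν[|K], x ∈ interior K := by
  have hfrontier : ∀ᵐ x ∂ν[|K], x ∉ frontier K :=
    cond_absolutelyContinuous.ae_le (measure_eq_zero_iff_ae_notMem.1 (hK.addHaar_frontier ν))
  filter_upwards [hfrontier, ae_cond_mem₀ (hK.nullMeasurableSet ν)] with x hx hxK
  by_contra hxi
  exact hx ⟨subset_closure hxK, hxi⟩

lemma pow_le_measureReal_cond_closedBall (hK : Convex ℝ K) (hK0 : ν K ≠ 0) (hKtop : ν K ≠ ⊤)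
    {D : ℝ} (hD : ∀ x ∈ K, ∀ y ∈ K, dist x y ≤ D) {x : E} (hx : x ∈ K) {r : ℝ}
    (hr : r ∈ Icc 0 1) :
    r ^ finrank ℝ E ≤ ν[|K].real (closedBall x (r * D)) := by
  have hle : ν.real (AffineMap.homothety x r '' K) ≤ ν.real (K ∩ closedBall x (r * D)) :=
    measureReal_mono (homothety_image_subset_closedBall_inter hK hD hx hr)
      (measure_ne_top_of_subset inter_subset_left hKtop)
  have hvol : ν.real (AffineMap.homothety x r '' K) = r ^ finrank ℝ E * ν.real K := by
    have hpow : 0 ≤ r ^ finrank ℝ E := pow_nonneg hr.1 _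
    rw [Measure.real, Measure.addHaar_image_homothety, ENNReal.toReal_mul, abs_of_nonneg hpow,
      ENNReal.toReal_ofReal hpow, Measure.real]
  have hKpos : 0 < ν.real K := ENNReal.toReal_pos hK0 hKtop
  rwa [measureReal_cond_apply ν measurableSet_closedBall, ← div_eq_inv_mul, le_div_iff₀ hKpos,
    ← hvol]

lemma min_one_le_measureReal_cond_closedBall (hK : Convex ℝ K) (hK0 : ν K ≠ 0)
    (hKtop : ν K ≠ ⊤) {D : ℝ} (hD0 : 0 < D) (hD : ∀ x ∈ K, ∀ y ∈ K, dist x y ≤ D) {x : E}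
    (hx : x ∈ K) {t : ℝ} (ht : 0 ≤ t) :
    min 1 ((D ^ finrank ℝ E)⁻¹ * t ^ finrank ℝ E) ≤ ν[|K].real (closedBall x t) := by
  have : IsProbabilityMeasure ν[|K] := cond_isProbabilityMeasure_of_finite hK0 hKtop
  rcases le_total t D with htD | htD
  · have hr : t / D ∈ Icc 0 1 := ⟨by positivity, (div_le_one hD0).2 htD⟩
    refine (min_le_right _ _).trans ?_
    rw [← inv_pow, ← mul_pow, ← div_eq_inv_mul]
    simpa only [div_mul_cancel₀ t hD0.ne'] using
      pow_le_measureReal_cond_closedBall ν hK hK0 hKtop hD hx hr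
  · refine (min_le_left _ _).trans ?_
    calc 1 = (1 : ℝ) ^ finrank ℝ E := (one_pow _).symm
      _ ≤ ν[|K].real (closedBall x (1 * D)) :=
        pow_le_measureReal_cond_closedBall ν hK hK0 hKtop hD hx (right_mem_Icc.2 zero_le_one)
      _ ≤ ν[|K].real (closedBall x t) :=
        measureReal_mono (closedBall_subset_closedBall (by rwa [one_mul]))

lemma tendsto_measureReal_cond_closedBall_div_pow {x : E} (hx : x ∈ interior K) :
    Tendsto (fun t => ν[|K].real (closedBall x t) / t ^ finrank ℝ E) (𝓝[>] 0)
      (𝓝 (ν.real (closedBall 0 1) / ν.real K)) := by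
  obtain ⟨ε, hε, hball⟩ := nhds_basis_closedBall.mem_iff.1 (mem_interior_iff_mem_nhds.1 hx)
  refine tendsto_const_nhds.congr' ?_
  filter_upwards [Ioc_mem_nhdsGT hε] with t ⟨ht0, htε⟩
  have hsub : closedBall x t ⊆ K := (closedBall_subset_closedBall htε).trans hball
  rw [measureReal_cond_apply ν measurableSet_closedBall, inter_eq_self_of_subset_right hsub,
    Measure.addHaar_real_closedBall' ν x ht0.le]
  field_simp

theorem tendsto_rpow_mul_meanNearestDist_cond [Nontrivial E] (hK : Convex ℝ K)
    (hK_bdd : IsBounded K) (hK_int : (interior K).Nonempty) :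
    Tendsto (fun N : ℕ => (N : ℝ) ^ (1 / (finrank ℝ E : ℝ)) * meanNearestDist ν[|K] N) atTop
      (𝓝 ((ν.real (closedBall 0 1) / ν.real K) ^ (-1 / (finrank ℝ E : ℝ)) *
        Real.Gamma (1 / (finrank ℝ E : ℝ) + 1))) := by
  have hK0 : ν K ≠ 0 := (Measure.measure_pos_of_nonempty_interior ν hK_int).ne'
  have hKtop : ν K ≠ ⊤ := hK_bdd.measure_lt_top.ne
  have : IsProbabilityMeasure ν[|K] := cond_isProbabilityMeasure_of_finite hK0 hKtop
  obtain ⟨D, hD0, hD⟩ : ∃ D > 0, ∀ x ∈ K, ∀ y ∈ K, dist x y ≤ D :=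
    ⟨diam K + 1, by positivity, fun x hx y hy => by linarith [dist_le_diam_of_mem hK_bdd hx hy]⟩
  have hdim : (0 : ℝ) < finrank ℝ E := Nat.cast_pos.2 finrank_pos
  have hmain := tendsto_rpow_mul_meanNearestDist (μ := ν[|K]) (c := (D ^ finrank ℝ E)⁻¹)
    (b := fun _ => ν.real (closedBall 0 1) / ν.real K) hdim (by positivity)
  simp only [Real.rpow_natCast, integral_const, probReal_univ, one_smul] at hmain
  refine hmain ?_ ?_
  · filter_upwards [ae_cond_mem₀ (hK.nullMeasurableSet ν)] with x hx t ht using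
      min_one_le_measureReal_cond_closedBall ν hK hK0 hKtop hD0 hD hx ht.le
  · filter_upwards [ae_cond_mem_interior ν hK] with x hx using
      tendsto_measureReal_cond_closedBall_div_pow ν hx

theorem stmt_11_general [Nontrivial E] (hK : Convex ℝ K) (hK_bdd : IsBounded K)
    (hK_int : (interior K).Nonempty) :
    Tendsto (fun N : ℕ => meanNearestDist ν[|K] N /
        (Real.Gamma (1 / (finrank ℝ E : ℝ) + 1) *
          (ν.real K / ν.real (closedBall 0 1) / N) ^ (1 / (finrank ℝ E : ℝ))))
      atTop (𝓝 1) := by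
  have hlim := tendsto_rpow_mul_meanNearestDist_cond ν hK hK_bdd hK_int
  have hdim : (0 : ℝ) < finrank ℝ E := Nat.cast_pos.2 finrank_pos
  have hKpos : 0 < ν.real K := ENNReal.toReal_pos
    (Measure.measure_pos_of_nonempty_interior ν hK_int).ne' hK_bdd.measure_lt_top.ne
  have hball : 0 < ν.real (closedBall 0 1) := ENNReal.toReal_pos
    (measure_closedBall_pos ν 0 one_pos).ne' measure_closedBall_lt_top.ne
  have hGamma : 0 < Real.Gamma (1 / (finrank ℝ E : ℝ) + 1) := Real.Gamma_pos_of_pos (by positivity)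
  rw [neg_div, Real.rpow_neg (by positivity), ← Real.inv_rpow (by positivity), inv_div] at hlim
  have hone := hlim.div_const
    ((ν.real K / ν.real (closedBall 0 1)) ^ (1 / (finrank ℝ E : ℝ)) *
      Real.Gamma (1 / (finrank ℝ E : ℝ) + 1))
  rw [div_self (by positivity)] at hone
  refine hone.congr' ?_
  filter_upwards [eventually_ne_atTop 0] with N hN
  rw [Real.div_rpow (by positivity) N.cast_nonneg]
  have hNpos : 0 < (N : ℝ) ^ (1 / (finrank ℝ E : ℝ)) := by positivity
  field_simp [hNpos.ne']

end ConvexBody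

lemma volume_real_euclidean_closedBall_zero_one (s : ℕ) [NeZero s] :
    volume.real (Metric.closedBall (0 : EuclideanSpace ℝ (Fin s)) 1) =
      √Real.pi ^ s / Real.Gamma ((s : ℝ) / 2 + 1) := by
  have : 0 < Real.Gamma ((s : ℝ) / 2 + 1) := Real.Gamma_pos_of_pos (by positivity)
  rw [Measure.real, EuclideanSpace.volume_closedBall, ENNReal.toReal_mul, Fintype.card_fin,
    ENNReal.toReal_ofReal (by positivity)]
  simp

lemma Gamma_mul_div_volume_unitBall_rpow {s : ℕ} (hs : s ≠ 0) {v : ℝ} (hv : 0 ≤ v) (n : ℕ) :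
    Real.Gamma (1 / (s : ℝ) + 1) *
        (v / (√Real.pi ^ s / Real.Gamma ((s : ℝ) / 2 + 1)) / n) ^ (1 / (s : ℝ)) =
      Real.Gamma ((s : ℝ) / 2 + 1) ^ (1 / (s : ℝ)) * Real.Gamma (1 / s) / (√Real.pi * s) *
        (v / n) ^ (1 / (s : ℝ)) := by
  have hs' : (s : ℝ) ≠ 0 := Nat.cast_ne_zero.2 hs
  have hG : 0 < Real.Gamma ((s : ℝ) / 2 + 1) := Real.Gamma_pos_of_pos (by positivity)
  have hsplit : v / (√Real.pi ^ s / Real.Gamma ((s : ℝ) / 2 + 1)) / n =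
      Real.Gamma ((s : ℝ) / 2 + 1) / √Real.pi ^ s * (v / n) := by field_simp
  rw [hsplit, Real.mul_rpow (by positivity) (by positivity), Real.div_rpow hG.le (by positivity),
    Real.Gamma_add_one (by positivity), one_div (s : ℝ),
    Real.pow_rpow_inv_natCast (by positivity) hs]
  field_simp

/-- For i.i.d. uniform points in a convex body `K ⊂ ℝ^s` of volume `V`, the expected
nearest-neighbor distance satisfies
`E[min_i |X − xᵢ|] ∼ (Γ(s/2+1)^{1/s} Γ(1/s)/(√π s)) (V/N)^{1/s}` as `N → ∞`. -/
theorem stmt_11 (s : ℕ) (hs : 1 ≤ s) (K : Set (EuclideanSpace ℝ (Fin s)))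
    (hKconv : Convex ℝ K) (hKcomp : IsCompact K) (hKint : (interior K).Nonempty)
    (V : ℝ) (hV : V = (volume K).toReal) :
    Tendsto (fun N : ℕ =>
      (∫ ω : Fin (N + 1) → EuclideanSpace ℝ (Fin s),
          (⨅ i : Fin N, dist (ω (Fin.last N)) (ω i.castSucc))
        ∂(Measure.pi fun _ : Fin (N + 1) => (volume K)⁻¹ • volume.restrict K)) /
        ((Real.Gamma ((s : ℝ) / 2 + 1) ^ ((1 : ℝ) / s) * Real.Gamma (1 / s) /
            (Real.sqrt Real.pi * s)) * (V / N) ^ ((1 : ℝ) / s)))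
      atTop (nhds 1) := by
  have : NeZero s := ⟨Nat.one_le_iff_ne_zero.1 hs⟩
  simpa only [meanNearestDist, ProbabilityTheory.cond, finrank_euclideanSpace_fin,
    volume_real_euclidean_closedBall_zero_one,
    Gamma_mul_div_volume_unitBall_rpow (NeZero.ne s) measureReal_nonneg,
    ← measureReal_def, hV] using stmt_11_general volume hKconv hKcomp.isBounded hKint
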